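/- Let (W, W') be an exchangeable pair of real-valued random variables with E(W − W' | W) = λ·W + R almost surely, for some constant 0 < λ < 1 and some random variable R measurable with respect to σ(W), and set Δ := W − W'. If |W − W'| ≤ A almost surely for some A > 0 and E|W| ≤ 2, then d_K(W, Z) ≤ E|1 − (1/(2λ))·E(Δ² | W)| + E|R|/λ + 3·A. -/

import Mathlib

/-!
The proof is Stein's method for exchangeable pairs. Let `f = steinSol z` be the bounded solution of
`f' w - w f w = 1_{w ≤ z} - Φ(z)`, so that `P(W ≤ z) - Φ(z) = E f'(W) - E W f(W)`. It satisfies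
`|f| ≤ 1`, `|f'| ≤ 1` and `|w f w| ≤ 1`, and `w ↦ w f w` is increasing; all of this follows from the
two-sided bounds `w / (1 + w²) ≤ m(w)` and `w m(w) ≤ 1` for the Mills ratio `m` (`mills`).

By exchangeability `E Δ (f(W) - f(W')) = 2 E Δ f(W) = 2 λ E W f(W) + 2 E R f(W)`, hence
`E f'(W) - E W f(W) = E f'(W) (1 - Δ² / (2λ)) - ε / (2λ) + E R f(W) / λ` with
`ε = E Δ (f(W) - f(W')) - E Δ² f'(W)`. The first and last terms are bounded by
`E|1 - E(Δ² | W) / (2λ)|` and `E|R| / λ`.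

For `ε`, exchangeability replaces `f'(W)` by the average of `f'(W)` and `f'(W')`, which makes `ε` the
error of a trapezoid rule. Up to a constant, `f'` is the sum of the increasing function `w f w` and
the decreasing function `1_{w ≤ z}`; with `h w = w f w - 1_{w ≤ z}` (`oscFun`, increasing,
`|h| ≤ 2`) the lemma `trapezoid_symm` bounds the integrand by `(A / 2) Δ (h(W) - h(W'))`. A second
use of exchangeability gives
`|ε| ≤ A E Δ h(W) = A E (λ W + R) h(W) ≤ 2 A (2 λ + E|R|)`,
so `|ε| / (2λ) ≤ A (2 + E|R| / λ)`. This is at most `3 A` when `E|R| / λ ≤ 1`, and otherwise the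
claim is trivial.
-/

open MeasureTheory ProbabilityTheory Real

/-- The standard normal cumulative distribution function. -/
noncomputable def stdNormalCDF (z : ℝ) : ℝ :=
  (ProbabilityTheory.gaussianReal 0 1 (Set.Iic z)).toReal


open Set Filter Topology

/-! ### Gaussian tails and the Mills ratio -/

namespace SteinKolmogorov

/-- The unnormalised Gaussian tail `∫_w^∞ e^{-x²/2} dx`. -/
noncomputable def tail (w : ℝ) : ℝ := ∫ x in Ioi w, exp (-x ^ 2 / 2)

/-- The Mills ratio `e^{w²/2} ∫_w^∞ e^{-x²/2} dx` of the standard normal law. -/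
noncomputable def mills (w : ℝ) : ℝ := exp (w ^ 2 / 2) * tail w

lemma integrable_gauss : Integrable (fun x : ℝ => exp (-x ^ 2 / 2)) := by
  have h := integrable_exp_neg_mul_sq (b := 1 / 2) (by norm_num)
  refine h.congr (ae_of_all _ fun x => ?_)
  simp only
  ring_nf

lemma continuous_gauss : Continuous (fun x : ℝ => exp (-x ^ 2 / 2)) := by fun_prop

lemma hasDerivAt_gauss (x : ℝ) :
    HasDerivAt (fun x : ℝ => exp (-x ^ 2 / 2)) (-(x * exp (-x ^ 2 / 2))) x := by
  have h : HasDerivAt (fun x : ℝ => -x ^ 2 / 2) (-x) x := by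
    refine ((hasDerivAt_pow 2 x).fun_neg.div_const 2).congr_deriv ?_
    simp
    ring
  refine h.exp.congr_deriv ?_
  ring

lemma tail_pos (w : ℝ) : 0 < tail w := by
  unfold tail
  rw [setIntegral_pos_iff_support_of_nonneg_ae (ae_of_all _ fun x => (exp_pos _).le)
    integrable_gauss.integrableOn]
  have : Function.support (fun x : ℝ => exp (-x ^ 2 / 2)) = univ := by
    ext x; simp [(exp_pos _).ne']
  rw [this]
  simp

lemma tail_eq (w : ℝ) : tail w = tail 0 - ∫ x in (0 : ℝ)..w, exp (-x ^ 2 / 2) := by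
  have := intervalIntegral.integral_interval_add_Ioi (a := 0) (b := w)
    integrable_gauss.integrableOn integrable_gauss.integrableOn
  unfold tail
  linarith

lemma hasDerivAt_tail (w : ℝ) : HasDerivAt tail (-exp (-w ^ 2 / 2)) w := by
  have h : HasDerivAt (fun w => tail 0 - ∫ x in (0 : ℝ)..w, exp (-x ^ 2 / 2))
      (-exp (-w ^ 2 / 2)) w :=
    (intervalIntegral.integral_hasDerivAt_right (continuous_gauss.intervalIntegrable _ _)
      (continuous_gauss.stronglyMeasurableAtFilter _ _) continuous_gauss.continuousAt).const_sub _
  exact h.congr_of_eventuallyEq (Eventually.of_forall tail_eq)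

lemma antitone_tail : Antitone tail :=
  antitone_of_hasDerivAt_nonpos hasDerivAt_tail fun w => by
    simpa using (exp_pos _).le

lemma tendsto_tail : Tendsto tail atTop (𝓝 0) := tendsto_integral_Ioi_zero tendsto_id

lemma tail_neg (w : ℝ) : tail (-w) = ∫ x in Iic w, exp (-x ^ 2 / 2) := by
  unfold tail
  rw [← integral_comp_neg_Iic]
  simp

lemma tail_add_tail_neg (w : ℝ) : tail w + tail (-w) = √(2 * π) := by
  have h1 := intervalIntegral.integral_Iic_add_Ioi (b := w)
    integrable_gauss.integrableOn integrable_gauss.integrableOn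
  have h2 := integral_gaussian (1 / 2)
  have h3 : ∫ x : ℝ, exp (-x ^ 2 / 2) = ∫ x : ℝ, exp (-(1 / 2) * x ^ 2) := by
    congr 1; ext x; ring_nf
  rw [tail_neg, tail, add_comm, h1, h3, h2]
  congr 1
  ring

lemma stdNormalCDF_eq (z : ℝ) : stdNormalCDF z = tail (-z) / √(2 * π) := by
  unfold stdNormalCDF
  rw [gaussianReal_apply_eq_integral 0 one_ne_zero, ENNReal.toReal_ofReal, tail_neg]
  · simp only [gaussianPDFReal]
    rw [integral_const_mul]
    simp [div_eq_inv_mul]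
  · exact integral_nonneg fun x => gaussianPDFReal_nonneg _ _ _

lemma sqrt_two_pi_pos : 0 < √(2 * π) := by positivity

lemma mills_pos (w : ℝ) : 0 < mills w := mul_pos (exp_pos _) (tail_pos w)

lemma exp_mul_exp_neg_sq (w : ℝ) : exp (w ^ 2 / 2) * exp (-w ^ 2 / 2) = 1 := by
  rw [← exp_add]; ring_nf; simp

lemma hasDerivAt_mills (w : ℝ) : HasDerivAt mills (w * mills w - 1) w := by
  have h1 : HasDerivAt (fun w : ℝ => exp (w ^ 2 / 2)) (exp (w ^ 2 / 2) * w) w := by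
    have := ((hasDerivAt_pow 2 w).div_const 2).exp
    convert this using 1
    simp
  have h := h1.mul (hasDerivAt_tail w)
  refine h.congr_deriv ?_
  have := exp_mul_exp_neg_sq w
  unfold mills
  linear_combination -this

lemma mul_tail_le (w : ℝ) : w * tail w ≤ exp (-w ^ 2 / 2) := by
  rcases le_or_gt w 0 with hw | hw
  · nlinarith [tail_pos w, exp_pos (-w ^ 2 / 2)]
  have hd : ∀ x ∈ Ici w, HasDerivAt (fun x : ℝ => exp (-x ^ 2 / 2))
      (-(x * exp (-x ^ 2 / 2))) x := fun x _ => hasDerivAt_gauss x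
  have hneg : ∀ x ∈ Ioi w, -(x * exp (-x ^ 2 / 2)) ≤ 0 := fun x hx => by
    have : 0 < x := hw.trans hx
    have := exp_pos (-x ^ 2 / 2)
    have : 0 < x * exp (-x ^ 2 / 2) := by positivity
    linarith
  have ht : Tendsto (fun x : ℝ => exp (-x ^ 2 / 2)) atTop (𝓝 0) := by
    apply tendsto_exp_atBot.comp
    have : Tendsto (fun x : ℝ => x ^ 2 / 2) atTop atTop :=
      (tendsto_pow_atTop two_ne_zero).atTop_div_const (by norm_num)
    refine (tendsto_neg_atTop_atBot.comp this).congr fun x => ?_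
    simp; ring
  have hi := integrableOn_Ioi_deriv_of_nonpos' hd hneg ht
  have he := integral_Ioi_of_hasDerivAt_of_nonpos' hd hneg ht
  rw [integral_neg] at he
  have he' : ∫ x in Ioi w, x * exp (-x ^ 2 / 2) = exp (-w ^ 2 / 2) := by linarith
  rw [← he', tail, ← integral_const_mul]
  refine setIntegral_mono_on (integrable_gauss.integrableOn.const_mul _) ?_ measurableSet_Ioi ?_
  · simpa using hi.neg
  · intro x hx
    exact mul_le_mul_of_nonneg_right (le_of_lt hx) (exp_pos _).le

lemma mul_mills_le_one (w : ℝ) : w * mills w ≤ 1 := by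
  have h := mul_le_mul_of_nonneg_left (mul_tail_le w) (exp_pos (w ^ 2 / 2)).le
  rw [exp_mul_exp_neg_sq] at h
  unfold mills
  linarith

/-- The lower bound for the Mills ratio: `tail w - w e^{-w²/2} / (1 + w²)` is decreasing, with
limit `0` at infinity. -/
lemma le_mul_mills (w : ℝ) : w ≤ (1 + w ^ 2) * mills w := by
  have hpos : ∀ x : ℝ, 0 < 1 + x ^ 2 := fun x => by positivity
  set j : ℝ → ℝ := fun x => tail x - x * exp (-x ^ 2 / 2) / (1 + x ^ 2) with hj
  have hd : ∀ x, HasDerivAt j (-(2 * exp (-x ^ 2 / 2) / (1 + x ^ 2) ^ 2)) x := fun x => by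
    have h1 := hasDerivAt_gauss x
    have h2 : HasDerivAt (fun x : ℝ => 1 + x ^ 2) (2 * x) x := by
      simpa using (hasDerivAt_pow 2 x).const_add 1
    have h := (hasDerivAt_tail x).sub (((hasDerivAt_id x).mul h1).div h2 (hpos x).ne')
    refine h.congr_deriv ?_
    have := (hpos x).ne'
    simp only [id, Pi.mul_apply]
    field_simp
    ring
  have hanti : Antitone j := antitone_of_hasDerivAt_nonpos hd fun x => by
    have := hpos x
    simp only [Pi.zero_apply, Left.neg_nonpos_iff]
    positivity
  have hlim : Tendsto j atTop (𝓝 0) := by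
    have : Tendsto (fun x : ℝ => x * exp (-x ^ 2 / 2) / (1 + x ^ 2)) atTop (𝓝 0) := by
      refine squeeze_zero' ?_ ?_ tendsto_inv_atTop_zero
      · filter_upwards [eventually_ge_atTop 0] with x hx
        have := hpos x
        positivity
      · filter_upwards [eventually_gt_atTop 0] with x hx
        have h1 : exp (-x ^ 2 / 2) ≤ 1 := exp_le_one_iff.2 (by nlinarith)
        rw [div_le_iff₀ (hpos x), inv_mul_eq_div, le_div_iff₀ hx]
        nlinarith [sq_nonneg x]
    simpa using tendsto_tail.sub this
  have h0 : 0 ≤ j w := hanti.le_of_tendsto hlim w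
  have h1 : w * exp (-w ^ 2 / 2) ≤ (1 + w ^ 2) * tail w := by
    have : w * exp (-w ^ 2 / 2) / (1 + w ^ 2) ≤ tail w := by simpa [hj] using h0
    rw [div_le_iff₀ (hpos w)] at this
    linarith
  have h := mul_le_mul_of_nonneg_left h1 (exp_pos (w ^ 2 / 2)).le
  have := exp_mul_exp_neg_sq w
  unfold mills
  calc w = exp (w ^ 2 / 2) * (w * exp (-w ^ 2 / 2)) := by linear_combination -w * this
    _ ≤ _ := h
    _ = _ := by ring

lemma antitone_mills : Antitone mills :=
  antitone_of_hasDerivAt_nonpos hasDerivAt_mills fun w => by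
    have := mul_mills_le_one w
    simp only [Pi.zero_apply]
    linarith

lemma tail_neg_mul_mills (w : ℝ) : tail (-w) * mills w = tail w * mills (-w) := by
  simp [mills]; ring

lemma tail_neg_mul_mills_le_of_nonneg {w : ℝ} (hw : 0 ≤ w) :
    tail (-w) * mills w ≤ √(2 * π) := by
  set c := √(2 * π) with hc
  have hsum := tail_add_tail_neg w
  have hc0 : 0 < c := sqrt_two_pi_pos
  rcases le_or_gt 1 w with h1 | h1
  · have := mul_mills_le_one w
    have hm := mills_pos w
    have : mills w ≤ 1 := by nlinarith
    have := tail_pos w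
    have := tail_pos (-w)
    nlinarith
  -- For `0 ≤ w < 1` write `tail w = e * m` with `e = e^{-w²/2} ≥ 1/2` and
  -- `m = mills w ≤ mills 0 = c / 2`. The quadratic `(c - e m) m` increases on `m ≤ c / 2`, so it is
  -- at most `3 c² / 8`, and `c ≤ 8 / 3`.
  have hm0 : mills 0 = c / 2 := by
    have := tail_add_tail_neg 0
    rw [neg_zero, ← hc] at this
    simp only [mills, ne_eq, OfNat.ofNat_ne_zero, not_false_eq_true, zero_pow, zero_div, exp_zero,
      one_mul]
    linarith
  have hm : mills w ≤ c / 2 := hm0 ▸ antitone_mills hw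
  set e := exp (-w ^ 2 / 2) with he
  have hee := exp_mul_exp_neg_sq w
  have he0 : 0 < e := exp_pos _
  have hehalf : 1 / 2 ≤ e := by
    have := add_one_le_exp (-w ^ 2 / 2)
    nlinarith
  have ht : tail w = e * mills w := by
    unfold mills
    linear_combination -tail w * hee
  have hmp := mills_pos w
  have he1 : e ≤ 1 := exp_le_one_iff.2 (by nlinarith)
  have hc2 : c ^ 2 = 2 * π := by
    rw [hc]; exact Real.sq_sqrt (by positivity)
  have hpi := Real.pi_lt_d2
  have hc3 : c ≤ 8 / 3 := by nlinarith
  have htn : tail (-w) = c - e * mills w := by linarith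
  rw [htn]
  have h2 : (c - e * mills w) * mills w ≤ (c - e * (c / 2)) * (c / 2) := by
    nlinarith [mul_nonneg (sub_nonneg.2 hm) (sub_nonneg.2 he1),
      mul_nonneg (sub_nonneg.2 hm) hmp.le,
      mul_nonneg (mul_nonneg (sub_nonneg.2 hm) (sub_nonneg.2 he1)) hmp.le,
      mul_nonneg (mul_nonneg (sub_nonneg.2 hm) (sub_nonneg.2 he1)) hc0.le]
  have h3 : (c - e * (c / 2)) * (c / 2) ≤ c * (3 / 8 * c) := by nlinarith
  nlinarith

lemma tail_neg_mul_mills_le (w : ℝ) : tail (-w) * mills w ≤ √(2 * π) := by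
  rcases le_total 0 w with h | h
  · exact tail_neg_mul_mills_le_of_nonneg h
  · rw [tail_neg_mul_mills]
    simpa using tail_neg_mul_mills_le_of_nonneg (w := -w) (by linarith)

/-! ### The solution of the Stein equation -/

/-- The branch of the Stein solution to the right of `z`; the branch to the left of `z` is its
reflection `w ↦ branch (-z) (-w)`. -/
noncomputable def branch (z w : ℝ) : ℝ := tail (-z) * mills w / √(2 * π)

/-- The bounded solution of the Stein equation `f' w - w f w = 1_{w ≤ z} - Φ(z)`. -/
noncomputable def steinSol (z w : ℝ) : ℝ := if w ≤ z then branch (-z) (-w) else branch z w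

/-- The indicator function of `(-∞, z]`. -/
noncomputable def ind (z w : ℝ) : ℝ := if w ≤ z then 1 else 0

/-- The derivative of the Stein solution; at the kink `z` this is the left derivative, the value
prescribed by the Stein equation. -/
noncomputable def steinDeriv (z w : ℝ) : ℝ := w * steinSol z w + ind z w - stdNormalCDF z

lemma tail_div_le_one (w : ℝ) : tail w / √(2 * π) ≤ 1 := by
  rw [div_le_one sqrt_two_pi_pos]
  have := tail_add_tail_neg w
  have := tail_pos (-w)
  linarith

lemma tail_div_pos (w : ℝ) : 0 < tail w / √(2 * π) := div_pos (tail_pos w) sqrt_two_pi_pos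

lemma tail_neg_div (w : ℝ) : tail (-w) / √(2 * π) = 1 - tail w / √(2 * π) := by
  have := tail_add_tail_neg w
  have := sqrt_two_pi_pos.ne'
  field_simp
  linarith

lemma branch_eq (z w : ℝ) : branch z w = tail (-z) / √(2 * π) * mills w := by
  unfold branch; ring

lemma branch_pos (z w : ℝ) : 0 < branch z w :=
  div_pos (mul_pos (tail_pos _) (mills_pos _)) sqrt_two_pi_pos

lemma branch_reflect (z : ℝ) : branch (-z) (-z) = branch z z := by
  unfold branch
  rw [tail_neg_mul_mills z, neg_neg]

lemma branch_le_diag {z w : ℝ} (h : z ≤ w) : branch z w ≤ branch w w := by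
  rw [branch_eq, branch_eq]
  have := sqrt_two_pi_pos
  have := antitone_tail (neg_le_neg h)
  have := (mills_pos w).le
  gcongr

lemma branch_le_one {z w : ℝ} (h : z ≤ w) : branch z w ≤ 1 := by
  refine (branch_le_diag h).trans ?_
  unfold branch
  rw [div_le_one sqrt_two_pi_pos]
  exact tail_neg_mul_mills_le w

lemma mul_branch_le (z w : ℝ) : w * branch z w ≤ tail (-z) / √(2 * π) := by
  rw [branch_eq]
  have := mul_mills_le_one w
  have := tail_div_pos (-z)
  nlinarith

lemma neg_mul_branch_le {z w : ℝ} (h : z ≤ w) : -(w * branch z w) ≤ tail w / √(2 * π) := by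
  rcases le_total 0 w with hw | hw
  · have := branch_pos z w
    have := tail_div_pos w
    nlinarith
  · calc -(w * branch z w) = (-w) * branch z w := by ring
      _ ≤ (-w) * branch w w := by
        have := branch_le_diag h
        have : 0 ≤ -w := by linarith
        gcongr
      _ = (-w) * branch (-w) (-w) := by rw [branch_reflect]
      _ ≤ _ := by simpa using mul_branch_le (-w) (-w)

lemma hasDerivAt_branch (z w : ℝ) :
    HasDerivAt (branch z) (w * branch z w - tail (-z) / √(2 * π)) w := by
  refine (((hasDerivAt_mills w).const_mul (tail (-z))).div_const (√(2 * π))).congr_deriv ?_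
  unfold branch
  ring

lemma continuous_branch (z : ℝ) : Continuous (branch z) :=
  continuous_iff_continuousAt.2 fun w => (hasDerivAt_branch z w).continuousAt

lemma monotone_mul_branch (z : ℝ) : Monotone (fun w => w * branch z w) := by
  have hd : ∀ w, HasDerivAt (fun w => w * branch z w)
      (1 * branch z w + w * (w * branch z w - tail (-z) / √(2 * π))) w := fun w =>
    (hasDerivAt_id w).fun_mul (hasDerivAt_branch z w)
  refine monotone_of_hasDerivAt_nonneg hd fun w => ?_
  have h1 := le_mul_mills w
  have h2 := (tail_div_pos (-z)).le
  simp only [Pi.zero_apply]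
  rw [branch_eq]
  nlinarith [mul_le_mul_of_nonneg_left h1 h2]

lemma steinSol_of_le {z w : ℝ} (h : w ≤ z) : steinSol z w = branch (-z) (-w) := if_pos h

lemma steinSol_of_ge {z w : ℝ} (h : z ≤ w) : steinSol z w = branch z w := by
  rcases h.eq_or_lt with rfl | h
  · rw [steinSol_of_le le_rfl, branch_reflect]
  · exact if_neg h.not_ge

lemma continuous_steinSol (z : ℝ) : Continuous (steinSol z) := by
  unfold steinSol
  refine Continuous.if_le ((continuous_branch _).comp continuous_neg) (continuous_branch z)
    continuous_id continuous_const ?_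
  rintro x rfl
  exact branch_reflect _

lemma abs_steinSol_le (z w : ℝ) : |steinSol z w| ≤ 1 := by
  rcases le_total w z with h | h
  · rw [steinSol_of_le h, abs_of_pos (branch_pos _ _)]
    exact branch_le_one (neg_le_neg h)
  · rw [steinSol_of_ge h, abs_of_pos (branch_pos _ _)]
    exact branch_le_one h

lemma abs_mul_steinSol_le (z w : ℝ) : |w * steinSol z w| ≤ 1 := by
  rcases le_total w z with h | h
  · rw [steinSol_of_le h, abs_le]
    have h1 := mul_branch_le (-z) (-w)
    have h2 := neg_mul_branch_le (neg_le_neg h)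
    have h3 := tail_div_le_one (-(-z))
    have h4 := tail_div_le_one (-w)
    constructor <;> linarith
  · rw [steinSol_of_ge h, abs_le]
    have h1 := mul_branch_le z w
    have h2 := neg_mul_branch_le h
    have h3 := tail_div_le_one (-z)
    have h4 := tail_div_le_one w
    constructor <;> linarith

lemma abs_steinDeriv_le (z w : ℝ) : |steinDeriv z w| ≤ 1 := by
  unfold steinDeriv ind
  rw [stdNormalCDF_eq]
  have hc := sqrt_two_pi_pos
  rcases le_or_gt w z with h | h
  · rw [steinSol_of_le h, abs_le, if_pos h]
    have h1 := mul_branch_le (-z) (-w)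
    have h2 := neg_mul_branch_le (neg_le_neg h)
    rw [neg_neg] at h1
    have h3 := tail_neg_div z
    have h4 : tail (-w) / √(2 * π) ≤ 1 - tail z / √(2 * π) := by
      rw [tail_neg_div]
      have := antitone_tail h
      have : tail z / √(2 * π) ≤ tail w / √(2 * π) := by gcongr
      linarith
    constructor <;> linarith
  · rw [steinSol_of_ge h.le, abs_le, if_neg h.not_ge]
    have h1 := mul_branch_le z w
    have h2 := neg_mul_branch_le h.le
    have h3 := tail_neg_div z
    have h4 : tail w / √(2 * π) ≤ tail z / √(2 * π) := by
      have := antitone_tail h.le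
      gcongr
    constructor <;> linarith

lemma monotone_mul_steinSol (z : ℝ) : Monotone (fun w => w * steinSol z w) := by
  have hl : ∀ {a b : ℝ}, a ≤ b → b ≤ z → a * steinSol z a ≤ b * steinSol z b := by
    intro a b hab hb
    rw [steinSol_of_le (hab.trans hb), steinSol_of_le hb]
    have := monotone_mul_branch (-z) (neg_le_neg hab)
    simp only at this
    linarith
  have hr : ∀ {a b : ℝ}, a ≤ b → z ≤ a → a * steinSol z a ≤ b * steinSol z b := by
    intro a b hab ha
    rw [steinSol_of_ge ha, steinSol_of_ge (ha.trans hab)]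
    exact monotone_mul_branch z hab
  intro a b hab
  simp only
  rcases le_total b z with hb | hb
  · exact hl hab hb
  rcases le_total a z with ha | ha
  · exact (hl ha le_rfl).trans (hr hb le_rfl)
  · exact hr hab ha

lemma antitone_ind (z : ℝ) : Antitone (ind z) := by
  intro a b hab
  unfold ind
  split_ifs with h1 h2 <;> first | exact absurd (hab.trans h1) h2 | norm_num

lemma abs_ind_le (z w : ℝ) : |ind z w| ≤ 1 := by
  unfold ind; split_ifs <;> norm_num

lemma measurable_ind (z : ℝ) : Measurable (ind z) := (antitone_ind z).measurable

lemma measurable_steinSol (z : ℝ) : Measurable (steinSol z) := (continuous_steinSol z).measurable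

lemma measurable_steinDeriv (z : ℝ) : Measurable (steinDeriv z) :=
  ((measurable_id.mul (measurable_steinSol z)).add (measurable_ind z)).sub_const _

lemma hasDerivAt_steinSol {z w : ℝ} (h : w ≠ z) :
    HasDerivAt (steinSol z) (steinDeriv z w) w := by
  unfold steinDeriv ind
  rw [stdNormalCDF_eq]
  rcases h.lt_or_gt with h | h
  · have h1 := (hasDerivAt_branch (-z) (-w)).scomp w (hasDerivAt_neg w)
    have h2 : steinSol z =ᶠ[𝓝 w] (branch (-z)) ∘ Neg.neg := by
      filter_upwards [eventually_lt_nhds h] with x hx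
      exact steinSol_of_le hx.le
    refine (h1.congr_of_eventuallyEq h2).congr_deriv ?_
    rw [steinSol_of_le h.le, if_pos h.le, tail_neg_div z, neg_neg]
    simp only [smul_eq_mul]
    ring
  · have h2 : steinSol z =ᶠ[𝓝 w] branch z := by
      filter_upwards [eventually_gt_nhds h] with x hx
      exact steinSol_of_ge hx.le
    refine ((hasDerivAt_branch z w).congr_of_eventuallyEq h2).congr_deriv ?_
    rw [steinSol_of_ge h.le, if_neg h.not_ge]
    ring

/-- The increasing function `w ↦ w f(w) - 1_{w ≤ z}` whose increments control the oscillation of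
`f'`. -/
noncomputable def oscFun (z w : ℝ) : ℝ := w * steinSol z w - ind z w

lemma abs_oscFun_le (z w : ℝ) : |oscFun z w| ≤ 2 := by
  have h1 := abs_le.1 (abs_mul_steinSol_le z w)
  have h2 := abs_le.1 (abs_ind_le z w)
  unfold oscFun
  rw [abs_le]
  constructor <;> linarith

lemma measurable_oscFun (z : ℝ) : Measurable (oscFun z) :=
  (measurable_id.mul (measurable_steinSol z)).sub (measurable_ind z)

/-- Error of the trapezoid rule for `∫_a^b f'`. Since `f'` is, up to a constant, the sum of an
increasing and a decreasing function, each of its values on `[a, b]` deviates from the mean of the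
two endpoint values by at most half the sum of the two variations. -/
lemma trapezoid {z a b : ℝ} (hab : a ≤ b) :
    |steinSol z b - steinSol z a - (b - a) * ((steinDeriv z a + steinDeriv z b) / 2)|
      ≤ (b - a) * ((oscFun z b - oscFun z a) / 2) := by
  have hi : IntervalIntegrable (steinDeriv z) volume a b := by
    refine (intervalIntegrable_const (c := (1 : ℝ))).mono_fun
      (measurable_steinDeriv z).aestronglyMeasurable (ae_of_all _ fun x => ?_)
    simpa using abs_steinDeriv_le z x
  have h := integral_eq_of_hasDerivAt_off_countable (steinSol z) (steinDeriv z) (a := a) (b := b)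
    (countable_singleton z) (continuous_steinSol z).continuousOn
    (fun x hx => hasDerivAt_steinSol hx.2) hi
  have hb : ∀ x ∈ Icc a b,
      (steinDeriv z a + steinDeriv z b) / 2 - (oscFun z b - oscFun z a) / 2 ≤ steinDeriv z x ∧
      steinDeriv z x ≤ (steinDeriv z a + steinDeriv z b) / 2 + (oscFun z b - oscFun z a) / 2 := by
    intro x hx
    have h1 := monotone_mul_steinSol z hx.1
    have h2 := monotone_mul_steinSol z hx.2
    have h3 := antitone_ind z hx.1
    have h4 := antitone_ind z hx.2
    simp only at h1 h2
    unfold steinDeriv oscFun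
    constructor <;> linarith
  have hl := intervalIntegral.integral_mono_on hab intervalIntegrable_const hi
    fun x hx => (hb x hx).1
  have hu := intervalIntegral.integral_mono_on hab hi intervalIntegrable_const
    fun x hx => (hb x hx).2
  rw [intervalIntegral.integral_const, smul_eq_mul, h] at hl hu
  rw [abs_le]
  constructor <;> linarith

/-- The trapezoid estimate multiplied by `w - w'`, in a form symmetric in the two points. -/
lemma trapezoid_symm {z w w' A : ℝ} (hA : |w - w'| ≤ A) :
    |(w - w') * (steinSol z w - steinSol z w')
        - ((w - w') ^ 2 * steinDeriv z w + (w - w') ^ 2 * steinDeriv z w') / 2|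
      ≤ A / 2 * ((w - w') * (oscFun z w - oscFun z w')) := by
  wlog h : w' ≤ w generalizing w w'
  · have := this (w := w') (w' := w) (by rwa [abs_sub_comm]) (le_of_not_ge h)
    convert this using 2 <;> ring
  have ht := trapezoid (z := z) h
  have hd : 0 ≤ w - w' := sub_nonneg.2 h
  rw [abs_of_nonneg hd] at hA
  have hnn := (abs_nonneg _).trans ht
  calc _ = (w - w') * |steinSol z w - steinSol z w'
          - (w - w') * ((steinDeriv z w' + steinDeriv z w) / 2)| := by
        rw [← abs_of_nonneg hd, ← abs_mul, abs_of_nonneg hd]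
        congr 1; ring
    _ ≤ A * ((w - w') * ((oscFun z w - oscFun z w') / 2)) :=
        mul_le_mul hA ht (abs_nonneg _) (hd.trans hA)
    _ = _ := by ring

/-! ### Exchangeable pairs -/

section Pair

variable {Ω : Type*} [MeasurableSpace Ω] {μ : Measure Ω} {W W' : Ω → ℝ}

lemma integral_exchange (hW : Measurable W) (hW' : Measurable W')
    (hexch : μ.map (fun ω => (W ω, W' ω)) = μ.map (fun ω => (W' ω, W ω)))
    {F : ℝ × ℝ → ℝ} (hF : Measurable F) :
    ∫ ω, F (W ω, W' ω) ∂μ = ∫ ω, F (W' ω, W ω) ∂μ := by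
  rw [← integral_map (f := F) (hW.prodMk hW').aemeasurable hF.aestronglyMeasurable, hexch,
    integral_map (hW'.prodMk hW).aemeasurable hF.aestronglyMeasurable]

lemma integral_mul_condExp_comap [IsProbabilityMeasure μ] (hW : Measurable W) {u : ℝ → ℝ}
    (hu : Measurable u) {C : ℝ} (hC : ∀ x, |u x| ≤ C) {Y : Ω → ℝ} (hY : Integrable Y μ) :
    ∫ ω, u (W ω) * Y ω ∂μ
      = ∫ ω, u (W ω) * (μ[Y | MeasurableSpace.comap W Real.measurableSpace]) ω ∂μ := by
  have hm := hW.comap_le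
  have hsm : StronglyMeasurable[MeasurableSpace.comap W Real.measurableSpace] (fun ω => u (W ω)) :=
    (hu.comp (comap_measurable W)).stronglyMeasurable
  have h := condExp_stronglyMeasurable_mul_of_bound hm hsm hY C (ae_of_all _ fun ω => hC (W ω))
  have h2 := integral_condExp (μ := μ) (f := (fun ω => u (W ω)) * Y) hm
  rw [integral_congr_ae h] at h2
  exact h2.symm

end Pair

end SteinKolmogorov

open SteinKolmogorov

/-- Shao–Zhang Berry–Esseen bound: if `(W, W')` is an exchangeable pair with
`E(W − W' | W) = λ W + R`, `|W − W'| ≤ A` a.s. and `E|W| ≤ 2`, then with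
`Δ = W − W'` the Kolmogorov distance of `W` to the standard normal is bounded by
`E|1 − (1/(2λ)) E(Δ²|W)| + E|R|/λ + 3 A`. -/
theorem stmt_1
    {Ω : Type*} [MeasurableSpace Ω] (μ : Measure Ω) [IsProbabilityMeasure μ]
    (W W' : Ω → ℝ) (hWmeas : Measurable W) (hW'meas : Measurable W')
    (hexch : μ.map (fun ω => (W ω, W' ω)) = μ.map (fun ω => (W' ω, W ω)))
    (lam : ℝ) (hlam0 : 0 < lam) (hlam1 : lam < 1)
    (R : Ω → ℝ)
    (hRmeas : Measurable[MeasurableSpace.comap W Real.measurableSpace] R)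
    (hRint : Integrable R μ)
    (hreg : (μ[fun ω => W ω - W' ω | MeasurableSpace.comap W Real.measurableSpace])
        =ᵐ[μ] fun ω => lam * W ω + R ω)
    (A : ℝ) (hA : 0 < A)
    (hbdd : ∀ᵐ ω ∂μ, |W ω - W' ω| ≤ A)
    (hWint : Integrable W μ) (hW1le : (∫ ω, |W ω| ∂μ) ≤ 2) :
    ∀ z : ℝ,
      |(μ {ω | W ω ≤ z}).toReal - stdNormalCDF z| ≤
        (∫ ω, |1 - (1 / (2 * lam)) *
            (μ[fun ω => (W ω - W' ω) ^ 2 |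
              MeasurableSpace.comap W Real.measurableSpace]) ω| ∂μ)
        + (∫ ω, |R ω| ∂μ) / lam + 3 * A := by
  intro z
  set a := (∫ ω, |R ω| ∂μ) / lam with ha
  set V := μ[fun ω => (W ω - W' ω) ^ 2 | MeasurableSpace.comap W Real.measurableSpace]
  have ha0 : 0 ≤ a := div_nonneg (integral_nonneg fun ω => abs_nonneg _) hlam0.le
  have hE0 : 0 ≤ ∫ ω, |1 - (1 / (2 * lam)) * V ω| ∂μ := integral_nonneg fun ω => abs_nonneg _
  -- The bound is trivial if `E|R|/λ ≥ 1`; otherwise the error term `A E|R|/λ` is at most `A`.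
  rcases le_or_gt 1 a with ha1 | ha1
  · have h1 : (μ {ω | W ω ≤ z}).toReal ≤ 1 := measureReal_le_one
    have h2 : stdNormalCDF z ≤ 1 := measureReal_le_one
    have h3 : 0 ≤ (μ {ω | W ω ≤ z}).toReal := ENNReal.toReal_nonneg
    have h4 : 0 ≤ stdNormalCDF z := ENNReal.toReal_nonneg
    rw [abs_le]
    constructor <;> linarith
  set f := steinSol z with hf
  set f' := steinDeriv z with hf'
  set h := oscFun z with hh
  have hfm : Measurable f := measurable_steinSol z
  have hf'm : Measurable f' := measurable_steinDeriv z
  have hhm : Measurable h := measurable_oscFun z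
  have hfb : ∀ x, |f x| ≤ 1 := abs_steinSol_le z
  have hf'b : ∀ x, |f' x| ≤ 1 := abs_steinDeriv_le z
  have hhb : ∀ x, |h x| ≤ 2 := abs_oscFun_le z
  have hΔ : Integrable (fun ω => W ω - W' ω) μ :=
    Integrable.of_bound (hWmeas.sub hW'meas).aestronglyMeasurable A hbdd
  have hΔ2 : Integrable (fun ω => (W ω - W' ω) ^ 2) μ := by
    refine Integrable.of_bound ((hWmeas.sub hW'meas).pow_const 2).aestronglyMeasurable (A ^ 2) ?_
    filter_upwards [hbdd] with ω hω
    rw [norm_pow]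
    exact pow_le_pow_left₀ (abs_nonneg _) hω 2
  have hmul : ∀ {u : ℝ → ℝ} {C : ℝ} {X Y : Ω → ℝ}, Measurable u → (∀ x, |u x| ≤ C) →
      Measurable X → Integrable Y μ → Integrable (fun ω => u (X ω) * Y ω) μ :=
    fun hu hC hX hY => hY.bdd_mul (hu.comp hX).aestronglyMeasurable (ae_of_all _ fun ω => hC _)
  have hVint : Integrable V μ := integrable_condExp
  -- The regression property, tested against a bounded function of `W`.
  have hregu : ∀ {u : ℝ → ℝ} {C : ℝ}, Measurable u → (∀ x, |u x| ≤ C) →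
      ∫ ω, u (W ω) * (W ω - W' ω) ∂μ
        = lam * ∫ ω, u (W ω) * W ω ∂μ + ∫ ω, u (W ω) * R ω ∂μ := by
    intro u C hu hC
    rw [integral_mul_condExp_comap hWmeas hu hC hΔ, ← integral_const_mul,
      ← integral_add ((hmul hu hC hWmeas hWint).const_mul lam) (hmul hu hC hWmeas hRint)]
    refine integral_congr_ae ?_
    filter_upwards [hreg] with ω hω
    rw [hω]
    ring
  -- Antisymmetry of `Δ` under exchange.
  have hanti : ∀ {u : ℝ → ℝ} {C : ℝ}, Measurable u → (∀ x, |u x| ≤ C) →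
      ∫ ω, (W ω - W' ω) * (u (W ω) - u (W' ω)) ∂μ = 2 * ∫ ω, u (W ω) * (W ω - W' ω) ∂μ := by
    intro u C hu hC
    have h1 := integral_exchange hWmeas hW'meas hexch
      (F := fun p => u p.1 * (p.1 - p.2)) (by fun_prop)
    simp only at h1
    have h2 : ∫ ω, (W ω - W' ω) * (u (W ω) - u (W' ω)) ∂μ
        = ∫ ω, u (W ω) * (W ω - W' ω) ∂μ - ∫ ω, u (W' ω) * (W ω - W' ω) ∂μ := by
      rw [← integral_sub (hmul hu hC hWmeas hΔ) (hmul hu hC hW'meas hΔ)]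
      congr 1; ext ω; ring
    have h3 : ∫ ω, u (W' ω) * (W' ω - W ω) ∂μ = - ∫ ω, u (W' ω) * (W ω - W' ω) ∂μ := by
      rw [← integral_neg]
      congr 1; ext ω; ring
    linarith
  have hanti_int : ∀ {u : ℝ → ℝ} {C : ℝ}, Measurable u → (∀ x, |u x| ≤ C) →
      Integrable (fun ω => (W ω - W' ω) * (u (W ω) - u (W' ω))) μ := by
    intro u C hu hC
    refine ((hmul hu hC hWmeas hΔ).sub (hmul hu hC hW'meas hΔ)).congr (ae_of_all _ fun ω => ?_)
    simp only [Pi.sub_apply]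
    ring
  -- The error of the symmetrised Taylor expansion.
  have hi1 := hmul hf'm hf'b hWmeas hΔ2
  have hi2 := hmul hf'm hf'b hW'meas hΔ2
  have hsym : ∫ ω, f' (W' ω) * (W ω - W' ω) ^ 2 ∂μ = ∫ ω, f' (W ω) * (W ω - W' ω) ^ 2 ∂μ := by
    have h1 := integral_exchange hWmeas hW'meas hexch
      (F := fun p => f' p.1 * (p.1 - p.2) ^ 2) (by fun_prop)
    simp only at h1
    rw [h1]
    congr 1; ext ω; ring
  have herr : |∫ ω, (W ω - W' ω) * (f (W ω) - f (W' ω)) ∂μ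
      - ∫ ω, f' (W ω) * (W ω - W' ω) ^ 2 ∂μ| ≤ A * ∫ ω, h (W ω) * (W ω - W' ω) ∂μ := by
    have h1 : ∫ ω, (W ω - W' ω) * (f (W ω) - f (W' ω)) ∂μ
        - ∫ ω, f' (W ω) * (W ω - W' ω) ^ 2 ∂μ
        = ∫ ω, ((W ω - W' ω) * (f (W ω) - f (W' ω)) -
          (f' (W ω) * (W ω - W' ω) ^ 2 + f' (W' ω) * (W ω - W' ω) ^ 2) / 2) ∂μ := by
      have hi3 : Integrable (fun ω => (f' (W ω) * (W ω - W' ω) ^ 2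
          + f' (W' ω) * (W ω - W' ω) ^ 2) / 2) μ := (hi1.add hi2).div_const 2
      rw [integral_sub (hanti_int hfm hfb) hi3, integral_div,
        integral_add hi1 hi2, hsym]
      ring
    have h2 : A * ∫ ω, h (W ω) * (W ω - W' ω) ∂μ
        = ∫ ω, A / 2 * ((W ω - W' ω) * (h (W ω) - h (W' ω))) ∂μ := by
      rw [integral_const_mul, hanti hhm hhb]
      ring
    rw [h1, h2, ← Real.norm_eq_abs]
    refine norm_integral_le_of_norm_le ((hanti_int hhm hhb).const_mul _) ?_
    filter_upwards [hbdd] with ω hω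
    refine le_of_eq_of_le ?_ (trapezoid_symm (z := z) hω)
    rw [Real.norm_eq_abs]
    congr 1
    ring
  have hosc : ∫ ω, h (W ω) * (W ω - W' ω) ∂μ ≤ 2 * lam * (2 + a) := by
    have hb : ∀ {Y : Ω → ℝ}, Integrable Y μ → ∫ ω, h (W ω) * Y ω ∂μ ≤ 2 * ∫ ω, |Y ω| ∂μ := by
      intro Y hY
      rw [← integral_const_mul]
      refine integral_mono (hmul hhm hhb hWmeas hY) (hY.abs.const_mul 2) fun ω => ?_
      refine (le_abs_self _).trans ?_
      rw [abs_mul]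
      exact mul_le_mul_of_nonneg_right (hhb _) (abs_nonneg _)
    rw [hregu hhm hhb]
    have h1 := hb hWint
    have h2 := hb hRint
    have h3 : ∫ ω, |R ω| ∂μ = lam * a := by rw [ha]; field_simp
    have h4 : lam * ∫ ω, h (W ω) * W ω ∂μ ≤ lam * (2 * 2) :=
      mul_le_mul_of_nonneg_left (h1.trans (by linarith)) hlam0.le
    nlinarith
  have hRf : |∫ ω, f (W ω) * R ω ∂μ| ≤ lam * a := by
    have h3 : ∫ ω, |R ω| ∂μ = lam * a := by rw [ha]; field_simp
    rw [← h3, ← Real.norm_eq_abs]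
    refine norm_integral_le_of_norm_le hRint.abs (ae_of_all _ fun ω => ?_)
    rw [Real.norm_eq_abs, abs_mul]
    exact mul_le_of_le_one_left (abs_nonneg _) (hfb _)
  have hf'int : Integrable (fun ω => f' (W ω)) μ :=
    Integrable.of_bound (hf'm.comp hWmeas).aestronglyMeasurable 1 (ae_of_all _ fun ω => hf'b _)
  have hmain : |∫ ω, f' (W ω) ∂μ - (1 / (2 * lam)) * ∫ ω, f' (W ω) * (W ω - W' ω) ^ 2 ∂μ|
      ≤ ∫ ω, |1 - (1 / (2 * lam)) * V ω| ∂μ := by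
    have hfV := hmul hf'm hf'b hWmeas hVint
    rw [integral_mul_condExp_comap hWmeas hf'm hf'b hΔ2, ← integral_const_mul,
      ← integral_sub hf'int (hfV.const_mul _), ← Real.norm_eq_abs]
    refine norm_integral_le_of_norm_le
      (((integrable_const 1).sub (hVint.const_mul _)).abs) (ae_of_all _ fun ω => ?_)
    have : f' (W ω) - 1 / (2 * lam) * (f' (W ω) * V ω)
        = f' (W ω) * (1 - 1 / (2 * lam) * V ω) := by ring
    rw [Real.norm_eq_abs, this, abs_mul]
    exact mul_le_of_le_one_left (abs_nonneg _) (hf'b (W ω))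
  -- The Stein equation, integrated against the law of `W`.
  have hstein : (μ {ω | W ω ≤ z}).toReal - stdNormalCDF z
      = ∫ ω, f' (W ω) ∂μ - ∫ ω, f (W ω) * W ω ∂μ := by
    have h1 : ∫ ω, ind z (W ω) ∂μ = (μ {ω | W ω ≤ z}).toReal := by
      have : (fun ω => ind z (W ω)) = {ω | W ω ≤ z}.indicator 1 := by
        ext ω; simp [ind, indicator]
      rw [this]
      exact integral_indicator_one (hWmeas measurableSet_Iic)
    have hindint : Integrable (fun ω => ind z (W ω)) μ :=
      Integrable.of_bound ((measurable_ind z).comp hWmeas).aestronglyMeasurable 1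
        (ae_of_all _ fun ω => abs_ind_le z _)
    rw [← h1, ← integral_sub hf'int (hmul hfm hfb hWmeas hWint)]
    have h2 : (fun ω => f' (W ω) - f (W ω) * W ω) = fun ω => ind z (W ω) - stdNormalCDF z := by
      ext ω
      simp only [hf', hf, steinDeriv]
      ring
    rw [h2, integral_sub hindint (integrable_const _)]
    simp
  have hreg_f := hregu hfm hfb
  have hanti_f := hanti hfm hfb
  rw [hstein]
  set Ef' := ∫ ω, f' (W ω) ∂μ
  set EWf := ∫ ω, f (W ω) * W ω ∂μ
  set ERf := ∫ ω, f (W ω) * R ω ∂μ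
  set Q := ∫ ω, f' (W ω) * (W ω - W' ω) ^ 2 ∂μ
  set D := ∫ ω, (W ω - W' ω) * (f (W ω) - f (W' ω)) ∂μ
  have hdecomp : Ef' - EWf = (Ef' - 1 / (2 * lam) * Q) - (D - Q) / (2 * lam) + ERf / lam := by
    rw [hanti_f, hreg_f]
    field_simp
    ring
  have he : |(D - Q) / (2 * lam)| ≤ A * (2 + a) := by
    rw [abs_div, abs_of_pos (by positivity : 0 < 2 * lam), div_le_iff₀ (by positivity)]
    calc _ ≤ A * ∫ ω, h (W ω) * (W ω - W' ω) ∂μ := herr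
      _ ≤ A * (2 * lam * (2 + a)) := by gcongr
      _ = _ := by ring
  have hr : |ERf / lam| ≤ a := by
    rw [abs_div, abs_of_pos hlam0, div_le_iff₀ hlam0]
    linarith
  have hAa : A * (2 + a) ≤ 3 * A := by nlinarith
  rw [hdecomp]
  calc _ ≤ |Ef' - 1 / (2 * lam) * Q| + |(D - Q) / (2 * lam)| + |ERf / lam| :=
        (abs_add_le _ _).trans (add_le_add_left (abs_sub _ _) _)
    _ ≤ _ := by linarith
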